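/- Let n ≥ 2. (i) Every class [f] ∈ 𝒜̄ₙ(−) can be expressed uniquely as [f] = [g] − [h], where g ∈ 𝒜_k(+, ×, ÷) and h ∈ ℱ_{n−k}(+, ×, ÷) for some 1 ≤ k ≤ n − 1. (ii) Every class [f] ∈ 𝒞̄ₙ(−) can be expressed uniquely either as [f] = [h] − [h] with h ∈ ℱ_{n/2}(+, ×, ÷), or as [f] = [g] + [h] − [h] with g ∈ 𝒞_{n−2k}(+, ×, ÷) and h ∈ ℱ_k(+, ×, ÷) for some 1 ≤ k < n/2. -/

import Mathlib

/- Common framework: `K = ℝ(x₁,x₂,…)` is the field of rational functions over `ℝ` in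
countably many variables (the fraction field of `MvPolynomial ℕ ℝ`), arithmetic
expressions, the permutation action, isomorphism, types, the `EndsWith` classification,
multilinear forms and monicity, isomorphism classes and their counting. -/

open MvPolynomial

noncomputable section

abbrev P : Type := MvPolynomial ℕ ℝ
abbrev K : Type := FractionRing P

def toK : P →+* K := algebraMap P K

/-- The variable `xᵢ`, as an element of `K`. -/
def Xv (i : ℕ) : K := toK (X i)

/-- `Vars f` : the set of variables on which `f` depends, i.e. the variables occurring in a
representation of `f` as a quotient of two coprime polynomials. -/
def Vars (f : K) : Set ℕ :=
  {i | ∃ p q : P, q ≠ 0 ∧ IsRelPrime p q ∧ f = toK p / toK q ∧ (i ∈ p.vars ∨ i ∈ q.vars)}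

/-- `𝒜` : the smallest subset of `K` containing every variable and closed under the four
binary operations applied to expressions with disjoint variable sets. -/
inductive IsAE : K → Prop
  | var (i : ℕ) : IsAE (Xv i)
  | add {g h : K} : IsAE g → IsAE h → Disjoint (Vars g) (Vars h) → IsAE (g + h)
  | sub {g h : K} : IsAE g → IsAE h → Disjoint (Vars g) (Vars h) → IsAE (g - h)
  | mul {g h : K} : IsAE g → IsAE h → Disjoint (Vars g) (Vars h) → IsAE (g * h)
  | div {g h : K} : IsAE g → IsAE h → Disjoint (Vars g) (Vars h) → IsAE (g / h)

/-- The action `σ·f` of a permutation of the variables on `K`, substituting `σ(xᵢ)` for `xᵢ`. -/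
def permAct (σ : Equiv.Perm ℕ) : K ≃+* K :=
  IsFractionRing.ringEquivOfRingEquiv (renameEquiv ℝ σ).toRingEquiv

/-- `f ≅ g` : `f` and `g` are isomorphic, i.e. differ by a permutation of the variables. -/
def Iso (f g : K) : Prop := ∃ σ : Equiv.Perm ℕ, permAct σ f = g

/-- First type: `-f ∉ 𝒜`. -/
def FirstType (f : K) : Prop := IsAE f ∧ ¬ IsAE (-f)

/-- Second type: `-f ∈ 𝒜` but `f ≇ -f`. -/
def SecondType (f : K) : Prop := IsAE f ∧ IsAE (-f) ∧ ¬ Iso f (-f)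

/-- Third type: `-f ∈ 𝒜` and `f ≅ -f`. -/
def ThirdType (f : K) : Prop := IsAE f ∧ IsAE (-f) ∧ Iso f (-f)

/-- The four binary operators. -/
inductive Op : Type
  | add | sub | mul | div
deriving DecidableEq

/-- `EndsWith f o` : the arithmetic expression `f` ends with the operator `o`. -/
inductive EndsWith : K → Op → Prop
  | var (i : ℕ) : EndsWith (Xv i) Op.mul
  | add_base {i j : ℕ} (hij : i ≠ j) : EndsWith (Xv i + Xv j) Op.add
  | sub_base {i j : ℕ} (hij : i ≠ j) : EndsWith (Xv i - Xv j) Op.sub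
  | mul_base {i j : ℕ} (hij : i ≠ j) : EndsWith (Xv i * Xv j) Op.mul
  | div_base {i j : ℕ} (hij : i ≠ j) : EndsWith (Xv i / Xv j) Op.div
  | add_rec {g h : K} {o₁ o₂ : Op} : IsAE g → IsAE h → Disjoint (Vars g) (Vars h) →
      3 ≤ (Vars (g + h)).ncard → o₁ ≠ Op.sub → o₂ ≠ Op.sub →
      EndsWith g o₁ → EndsWith h o₂ → EndsWith (g + h) Op.add
  | mul_rec {g h : K} {o₁ o₂ : Op} : IsAE g → IsAE h → Disjoint (Vars g) (Vars h) →
      3 ≤ (Vars (g * h)).ncard → o₁ ≠ Op.div → o₂ ≠ Op.div →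
      EndsWith g o₁ → EndsWith h o₂ → EndsWith (g * h) Op.mul
  | div_rec {g h : K} {o₁ o₂ : Op} : IsAE g → IsAE h → Disjoint (Vars g) (Vars h) →
      3 ≤ (Vars (g / h)).ncard → o₁ ≠ Op.div → o₂ ≠ Op.div →
      EndsWith g o₁ → EndsWith h o₂ → EndsWith (g / h) Op.div
  | sub_rec {g h : K} {o₁ o₂ : Op} : IsAE g → IsAE h → Disjoint (Vars g) (Vars h) →
      3 ≤ (Vars (g - h)).ncard → o₁ ≠ Op.sub → o₂ ≠ Op.sub → FirstType h →
      EndsWith g o₁ → EndsWith h o₂ → EndsWith (g - h) Op.sub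

/-- `f` ends with one of the operators in `s`. -/
def EndsIn (f : K) (s : Set Op) : Prop := ∃ o ∈ s, EndsWith f o

/-- The binary operation on `K` corresponding to an operator. -/
def applyOp (o : Op) (a b : K) : K :=
  match o with
  | Op.add => a + b
  | Op.sub => a - b
  | Op.mul => a * b
  | Op.div => a / b

/-- The variable index set `{1, …, n}` (for the variables `x₁, …, xₙ`). -/
def varsUpTo (n : ℕ) : Set ℕ := {i | 1 ≤ i ∧ i ≤ n}

/-- `𝒜ₙ` : arithmetic expressions whose variable set is exactly `{x₁, …, xₙ}`. -/
def AEn (n : ℕ) : Set K := {f | IsAE f ∧ Vars f = varsUpTo n}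

/-- A multilinear polynomial: degree at most `1` in each variable. -/
def Multilinear (p : P) : Prop := ∀ i : ℕ, p.degreeOf i ≤ 1

/-- The key of a (multilinear) monomial: the sorted list of variables occurring in it;
keys are compared in the lexicographic order on lists. -/
def monKey (m : ℕ →₀ ℕ) : List ℕ := m.support.sort (· ≤ ·)

/-- A (multilinear) polynomial is monic if the coefficient of its lexicographically
leading (i.e. first) monomial is positive. -/
def MonicML (p : P) : Prop :=
  ∃ m ∈ p.support, 0 < p.coeff m ∧ ∀ m' ∈ p.support, monKey m ≤ monKey m'

/-- `MLForm f F₁ F₂` : `F₁ / F₂` is the multilinear form of `f`: `F₁, F₂` are coprime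
multilinear polynomials, `F₂` is monic, and `f = F₁ / F₂`. -/
def MLForm (f : K) (F₁ F₂ : P) : Prop :=
  Multilinear F₁ ∧ Multilinear F₂ ∧ IsRelPrime F₁ F₂ ∧ F₂ ≠ 0 ∧ MonicML F₂ ∧
    f = toK F₁ / toK F₂

/-- A monic arithmetic expression: the numerator of its multilinear form is monic as well. -/
def MonicAE (f : K) : Prop := ∃ F₁ F₂ : P, MLForm f F₁ F₂ ∧ MonicML F₁

/-- The isomorphism class of `f`. -/
def classOf (f : K) : Set K := {g | Iso f g}

/-- `S̄` : the set of isomorphism classes of elements of `S`. -/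
def classes (S : Set K) : Set (Set K) := classOf '' S

/-- `|S̄|` : the number of isomorphism classes of elements of `S`. -/
def countClasses (S : Set K) : ℕ := (classes S).ncard

/-- The number of isomorphism classes of elements of `S` depending on exactly `k` variables. -/
def gradeCount (S : Set K) (k : ℕ) : ℕ := countClasses {f ∈ S | (Vars f).ncard = k}

/-- `ω_n` for a graded family having `N k` elements in grade `k` : the sum over all
partitions `(k₁^{m₁},…,k_s^{m_s})` of `n` of `∏ⱼ C(N kⱼ + mⱼ - 1, mⱼ)`. -/
def omega (N : ℕ → ℕ) (n : ℕ) : ℕ :=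
  ∑ p : n.Partition,
    ∏ k ∈ p.parts.toFinset, Nat.choose (N k + p.parts.count k - 1) (p.parts.count k)

/-- `ω_n′` : the same sum restricted to non-trivial partitions, i.e. `ω_n - N n`. -/
def omega' (N : ℕ → ℕ) (n : ℕ) : ℕ := omega N n - N n

/-- `𝒜(s)` : arithmetic expressions ending with one of the operators in `s`. -/
def Aset (s : Set Op) : Set K := {f | IsAE f ∧ EndsIn f s}

/-- `ℱ(s)` : first-type arithmetic expressions ending with one of the operators in `s`. -/
def Fset (s : Set Op) : Set K := {f | FirstType f ∧ EndsIn f s}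

/-- `ℬ(s)` : second-type arithmetic expressions ending with one of the operators in `s`. -/
def Bset (s : Set Op) : Set K := {f | SecondType f ∧ EndsIn f s}

/-- `𝒞(s)` : third-type arithmetic expressions ending with one of the operators in `s`. -/
def Cset (s : Set Op) : Set K := {f | ThirdType f ∧ EndsIn f s}

/-- `ℳℬ(s)` : monic second-type arithmetic expressions ending with an operator in `s`. -/
def MBset (s : Set Op) : Set K := {f | SecondType f ∧ MonicAE f ∧ EndsIn f s}


/-- A representative-level decomposition of the class `[f]` as `[g] − [h]` with
`g ∈ 𝒜_k(+,×,÷)` and `h ∈ ℱ_{n−k}(+,×,÷)` for some `1 ≤ k ≤ n − 1`. -/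
def ClassSubDecomp (n : ℕ) (f g h : K) : Prop :=
  IsAE g ∧ EndsIn g {Op.add, Op.mul, Op.div} ∧
  FirstType h ∧ EndsIn h {Op.add, Op.mul, Op.div} ∧
  Disjoint (Vars g) (Vars h) ∧ Iso f (g - h) ∧
  1 ≤ (Vars g).ncard ∧ (Vars g).ncard ≤ n - 1 ∧ (Vars h).ncard = n - (Vars g).ncard

/-- Witnesses for the form `[f] = [h] − [h]` with `h ∈ ℱ_{n/2}(+,×,÷)`. -/
def CSubFormA (n : ℕ) (f h h' : K) : Prop :=
  FirstType h ∧ EndsIn h {Op.add, Op.mul, Op.div} ∧ Iso h' h ∧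
  Disjoint (Vars h) (Vars h') ∧ Iso f (h - h') ∧ 2 * (Vars h).ncard = n

/-- Witnesses for the form `[f] = [g] + [h] − [h]` with `g ∈ 𝒞_{n−2k}(+,×,÷)` and
`h ∈ ℱ_k(+,×,÷)`, `1 ≤ k < n/2`. -/
def CSubFormB (n : ℕ) (f g h h' : K) : Prop :=
  ThirdType g ∧ EndsIn g {Op.add, Op.mul, Op.div} ∧
  FirstType h ∧ EndsIn h {Op.add, Op.mul, Op.div} ∧ Iso h' h ∧
  Disjoint (Vars g) (Vars h) ∧ Disjoint (Vars g) (Vars h') ∧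
  Disjoint (Vars h) (Vars h') ∧
  Iso f (g + h - h') ∧ 1 ≤ (Vars h).ncard ∧ 2 * (Vars h).ncard < n ∧
  (Vars g).ncard = n - 2 * (Vars h).ncard


/-! ### Partial derivatives on `K` -/

lemma toK_inj : Function.Injective toK := IsFractionRing.injective P K

lemma toK_ne_zero {q : P} (h : q ≠ 0) : toK q ≠ 0 := fun e => h (toK_inj (by simpa using e))

lemma exists_rep (f : K) : ∃ p q : P, q ≠ 0 ∧ IsRelPrime p q ∧ f = toK p / toK q :=
  ⟨IsFractionRing.num P f, IsFractionRing.den P f, nonZeroDivisors.coe_ne_zero _,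
    IsFractionRing.num_den_reduced P f, (IsFractionRing.mk'_num_den' P f).symm⟩

/-- The ring hom `p ↦ p + ε ∂ᵢp` on polynomials. -/
def dualP (i : ℕ) : P →+* TrivSqZeroExt K K where
  toFun p := TrivSqZeroExt.inl (toK p) + TrivSqZeroExt.inr (toK (pderiv i p))
  map_one' := by ext <;> simp
  map_zero' := by ext <;> simp
  map_add' p q := by ext <;> simp
  map_mul' p q := by
    ext
    · simp
    · simp
      ring

lemma dualP_fst (i : ℕ) (p : P) : (dualP i p).fst = toK p := by simp [dualP]
lemma dualP_snd (i : ℕ) (p : P) : (dualP i p).snd = toK (pderiv i p) := by simp [dualP]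

def dualK (i : ℕ) : K →+* TrivSqZeroExt K K :=
  IsLocalization.lift (M := nonZeroDivisors P) (g := dualP i) (by
    intro y
    rw [TrivSqZeroExt.isUnit_iff_isUnit_fst, dualP_fst]
    exact (toK_ne_zero (nonZeroDivisors.coe_ne_zero y)).isUnit)

lemma dualK_toK (i : ℕ) (p : P) : dualK i (toK p) = dualP i p :=
  IsLocalization.lift_eq _ _

lemma dualK_fst (i : ℕ) (f : K) : (dualK i f).fst = f := by
  have h : ((TrivSqZeroExt.fstHom K K K).toRingHom.comp (dualK i)) = RingHom.id K := by
    apply IsLocalization.ringHom_ext (nonZeroDivisors P)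
    ext p
    · change (dualK i (toK (C p))).fst = toK (C p)
      rw [dualK_toK, dualP_fst]
    · change (dualK i (toK (X p))).fst = toK (X p)
      rw [dualK_toK, dualP_fst]
  exact congrArg (fun φ => φ f) h

/-- The partial derivative `∂ᵢ` on `K`. -/
def D (i : ℕ) (f : K) : K := (dualK i f).snd

lemma D_toK (i : ℕ) (p : P) : D i (toK p) = toK (pderiv i p) := by
  rw [D, dualK_toK, dualP_snd]

lemma D_add (i : ℕ) (f g : K) : D i (f + g) = D i f + D i g := by simp [D]
lemma D_sub (i : ℕ) (f g : K) : D i (f - g) = D i f - D i g := by simp [D]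
lemma D_neg (i : ℕ) (f : K) : D i (-f) = - D i f := by simp [D]
lemma D_zero (i : ℕ) : D i 0 = 0 := by simp [D]
lemma D_one (i : ℕ) : D i 1 = 0 := by simp [D]
lemma D_mul (i : ℕ) (f g : K) : D i (f * g) = f * D i g + g * D i f := by
  simp [D, dualK_fst]
  ring
lemma D_sum (i : ℕ) (s : Finset K) : D i (∑ a ∈ s, a) = ∑ a ∈ s, D i a := by
  simp only [D, map_sum, TrivSqZeroExt.snd_sum]
lemma D_inv (i : ℕ) (f : K) (hf : f ≠ 0) : f ^ 2 * D i f⁻¹ = - D i f := by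
  have h := D_mul i f f⁻¹
  rw [mul_inv_cancel₀ hf, D_one] at h
  have : f * (f * D i f⁻¹ + f⁻¹ * D i f) = 0 := by rw [← h, mul_zero]
  rw [mul_add, ← mul_assoc, ← mul_assoc, mul_inv_cancel₀ hf] at this
  linear_combination this

/-- Quotient rule, in multiplied-out form. -/
lemma D_frac (i : ℕ) (p q : P) (hq : q ≠ 0) :
    toK q ^ 2 * D i (toK p / toK q) =
      toK (pderiv i p * q - p * pderiv i q) := by
  have h := D_mul i (toK p / toK q) (toK q)
  rw [div_mul_cancel₀ _ (toK_ne_zero hq), D_toK, D_toK] at h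
  have hq' := toK_ne_zero hq
  rw [map_sub, map_mul, map_mul, h]
  field_simp
  ring

lemma D_comm (i j : ℕ) (f : K) : D i (D j f) = D j (D i f) := by
  obtain ⟨p, q, hq, -, rfl⟩ := exists_rep f
  have hq' := toK_ne_zero hq
  set f := toK p / toK q with hf
  have e : toK p = f * toK q := by rw [hf, div_mul_cancel₀ _ hq']
  have hc : ∀ r : P, pderiv i (pderiv j r) = pderiv j (pderiv i r) := by
    intro r
    ext m
    simp only [coeff_pderiv]
    by_cases hij : i = j
    · subst hij; rfl
    · simp [hij, Ne.symm hij, add_right_comm]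
      ring
  have h1 : D i (D j (toK p)) = D j (D i (toK p)) := by simp only [D_toK, hc]
  have h2 : D i (D j (toK q)) = D j (D i (toK q)) := by simp only [D_toK, hc]
  rw [e] at h1
  simp only [D_mul, D_add] at h1
  rw [h2] at h1
  have : toK q * (D i (D j f) - D j (D i f)) = 0 := by linear_combination h1
  rcases mul_eq_zero.1 this with h | h
  · exact absurd h hq'
  · exact sub_eq_zero.1 h

lemma pderiv_ne_zero_of_mem_vars {i : ℕ} {p : P} (h : i ∈ p.vars) : pderiv i p ≠ 0 := by
  obtain ⟨m, hm, hi⟩ := (mem_vars_iff_mem_support i).1 h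
  intro h0
  have h1 := coeff_pderiv (i := i) p (m - Finsupp.single i 1)
  have hi' : m i ≠ 0 := by simpa using hi
  have h2 : m - Finsupp.single i 1 + Finsupp.single i 1 = m :=
    Finsupp.sub_add_single_one_cancel hi'
  rw [h0, h2, coeff_zero] at h1
  rcases mul_eq_zero.1 h1.symm with h3 | h3
  · exact (mem_support_iff.1 hm) h3
  · have : (0:ℝ) ≤ (((m - Finsupp.single i 1 : ℕ →₀ ℕ) i : ℕ) : ℝ) := Nat.cast_nonneg _
    linarith

lemma pderiv_eq_zero_of_dvd {i : ℕ} {q : P} (h : q ∣ pderiv i q) : pderiv i q = 0 := by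
  by_contra h0
  obtain ⟨r, hr⟩ := h
  have hq : q ≠ 0 := by rintro rfl; simp at h0
  have hr0 : r ≠ 0 := by rintro rfl; simp [hr] at h0
  have h1 := totalDegree_mul_of_isDomain hq hr0
  rw [← hr] at h1
  obtain ⟨m, hm, hm2⟩ := Finset.exists_mem_eq_sup _ (support_nonempty.2 h0) (fun s : ℕ →₀ ℕ => s.sum fun _ e => e)
  change totalDegree _ = _ at hm2
  have h3 : m + Finsupp.single i 1 ∈ q.support := by
    rw [mem_support_iff] at hm ⊢
    rw [coeff_pderiv] at hm
    exact left_ne_zero_of_mul hm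
  have h4 := le_totalDegree h3
  rw [Finsupp.sum_add_index' (by simp) (by simp)] at h4
  simp at h4
  omega

lemma mem_Vars {i : ℕ} {f : K} : i ∈ Vars f ↔ D i f ≠ 0 := by
  constructor
  · rintro ⟨p, q, hq, hpq, rfl, h⟩ h0
    have h1 := D_frac i p q hq
    rw [h0, mul_zero] at h1
    have h2 : pderiv i p * q - p * pderiv i q = 0 := toK_inj (by rw [← h1, map_zero])
    have h3 : pderiv i p * q = p * pderiv i q := sub_eq_zero.1 h2
    have h4 : pderiv i q = 0 := by
      apply pderiv_eq_zero_of_dvd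
      exact hpq.symm.dvd_of_dvd_mul_left ⟨_, by rw [← h3, mul_comm]⟩
    have h5 : pderiv i p = 0 := by
      rw [h4, mul_zero] at h3
      exact (mul_eq_zero.1 h3).resolve_right hq
    rcases h with h | h
    · exact pderiv_ne_zero_of_mem_vars h h5
    · exact pderiv_ne_zero_of_mem_vars h h4
  · intro h
    obtain ⟨p, q, hq, hpq, rfl⟩ := exists_rep f
    refine ⟨p, q, hq, hpq, rfl, ?_⟩
    by_contra hc
    push Not at hc
    apply h
    have h1 := D_frac i p q hq
    rw [pderiv_eq_zero_of_notMem_vars hc.1, pderiv_eq_zero_of_notMem_vars hc.2] at h1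
    simpa [toK_ne_zero hq] using h1

lemma not_mem_Vars {i : ℕ} {f : K} : i ∉ Vars f ↔ D i f = 0 := by
  rw [mem_Vars, not_not]

lemma Vars_finite (f : K) : (Vars f).Finite := by
  obtain ⟨p, q, hq, hpq, e⟩ := exists_rep f
  apply Set.Finite.subset (p.vars ∪ q.vars).finite_toSet
  intro i hi
  by_contra hc
  simp only [Finset.coe_union, Set.mem_union, Finset.mem_coe, not_or] at hc
  rw [mem_Vars] at hi
  apply hi
  have h1 := D_frac i p q hq
  rw [pderiv_eq_zero_of_notMem_vars hc.1, pderiv_eq_zero_of_notMem_vars hc.2, ← e] at h1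
  simpa [toK_ne_zero hq] using h1

lemma Vars_neg (f : K) : Vars (-f) = Vars f := by
  ext i; simp [mem_Vars, D_neg]

lemma Vars_inv (f : K) : Vars f⁻¹ = Vars f := by
  by_cases hf : f = 0
  · simp [hf]
  ext i
  have h := D_inv i f hf
  rw [mem_Vars, mem_Vars, not_iff_not]
  constructor
  · intro h0; rw [h0, mul_zero] at h; exact neg_eq_zero.1 h.symm
  · intro h0; rw [h0, neg_zero] at h
    exact (mul_eq_zero.1 h).resolve_left (pow_ne_zero 2 hf)

lemma disj_D {g h : K} (hd : Disjoint (Vars g) (Vars h)) (i : ℕ) : D i g = 0 ∨ D i h = 0 := by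
  by_contra hc
  push Not at hc
  exact Set.disjoint_left.1 hd (mem_Vars.2 hc.1) (mem_Vars.2 hc.2)

lemma Vars_add {g h : K} (hd : Disjoint (Vars g) (Vars h)) :
    Vars (g + h) = Vars g ∪ Vars h := by
  ext i
  rw [Set.mem_union, mem_Vars, mem_Vars, mem_Vars, D_add]
  rcases disj_D hd i with e | e <;> simp [e]

lemma Vars_sub {g h : K} (hd : Disjoint (Vars g) (Vars h)) :
    Vars (g - h) = Vars g ∪ Vars h := by
  rw [sub_eq_add_neg, Vars_add (by rwa [Vars_neg]), Vars_neg]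

lemma ne_zero_of_Vars {f : K} (h : (Vars f).Nonempty) : f ≠ 0 := by
  rintro rfl
  obtain ⟨i, hi⟩ := h
  exact mem_Vars.1 hi (D_zero i)

lemma Vars_mul {g h : K} (hg : (Vars g).Nonempty) (hh : (Vars h).Nonempty)
    (hd : Disjoint (Vars g) (Vars h)) :
    Vars (g * h) = Vars g ∪ Vars h := by
  ext i
  rw [Set.mem_union, mem_Vars, mem_Vars, mem_Vars, D_mul]
  rcases disj_D hd i with e | e <;> simp [e, ne_zero_of_Vars hg, ne_zero_of_Vars hh]

lemma Vars_div {g h : K} (hg : (Vars g).Nonempty) (hh : (Vars h).Nonempty)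
    (hd : Disjoint (Vars g) (Vars h)) :
    Vars (g / h) = Vars g ∪ Vars h := by
  rw [div_eq_mul_inv, Vars_mul hg (by rwa [Vars_inv]) (by rwa [Vars_inv]), Vars_inv]

lemma Vars_Xv (i : ℕ) : Vars (Xv i) = {i} := by
  ext j
  rw [mem_Vars, Xv, D_toK, Set.mem_singleton_iff]
  by_cases h : i = j
  · subst h; simp
  · simp [pderiv_X_of_ne h, Ne.symm h]

lemma const_of_Vars {f : K} (h : ∀ i, D i f = 0) : ∃ c : ℝ, f = toK (C c) := by
  obtain ⟨p, q, hq, hpq, e⟩ := exists_rep f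
  have hp : p.vars = ∅ := by
    apply Finset.eq_empty_of_forall_notMem
    intro i hi
    exact mem_Vars.1 (show i ∈ Vars f from ⟨p, q, hq, hpq, e, Or.inl hi⟩) (h i)
  have hq2 : q.vars = ∅ := by
    apply Finset.eq_empty_of_forall_notMem
    intro i hi
    exact mem_Vars.1 (show i ∈ Vars f from ⟨p, q, hq, hpq, e, Or.inr hi⟩) (h i)
  rw [vars_eq_empty_iff_eq_C] at hp hq2
  set a := p.coeff 0
  set b := q.coeff 0
  have hb : b ≠ 0 := by intro h0; rw [h0, map_zero] at hq2; exact hq hq2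
  refine ⟨a / b, ?_⟩
  rw [e, div_eq_iff (toK_ne_zero hq), hp, hq2, ← map_mul, ← map_mul, div_mul_cancel₀ _ hb]

lemma D_const (i : ℕ) (c : ℝ) : D i (toK (C c)) = 0 := by rw [D_toK, pderiv_C, map_zero]

/-! ### The permutation action -/

lemma permAct_toK (σ : Equiv.Perm ℕ) (p : P) : permAct σ (toK p) = toK (rename σ p) := by
  unfold permAct toK
  rw [IsFractionRing.ringEquivOfRingEquiv_algebraMap]
  rfl

lemma permAct_mul (σ τ : Equiv.Perm ℕ) (f : K) :
    permAct (σ * τ) f = permAct σ (permAct τ f) := by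
  obtain ⟨p, q, -, -, rfl⟩ := exists_rep f
  simp only [map_div₀, permAct_toK, rename_rename]
  rfl

lemma permAct_one (f : K) : permAct 1 f = f := by
  obtain ⟨p, q, -, -, rfl⟩ := exists_rep f
  have h : ((1 : Equiv.Perm ℕ) : ℕ → ℕ) = id := rfl
  simp only [map_div₀, permAct_toK, h, rename_id, AlgHom.id_apply]

lemma permAct_inv_self (σ : Equiv.Perm ℕ) (f : K) : permAct σ⁻¹ (permAct σ f) = f := by
  rw [← permAct_mul, inv_mul_cancel, permAct_one]

lemma permAct_Xv (σ : Equiv.Perm ℕ) (i : ℕ) : permAct σ (Xv i) = Xv (σ i) := by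
  rw [Xv, permAct_toK, rename_X, Xv]

lemma Iso_symm {f g : K} (h : Iso f g) : Iso g f := by
  obtain ⟨σ, rfl⟩ := h
  exact ⟨σ⁻¹, permAct_inv_self σ f⟩

lemma Iso_trans {f g h : K} (h1 : Iso f g) (h2 : Iso g h) : Iso f h := by
  obtain ⟨σ, rfl⟩ := h1
  obtain ⟨τ, rfl⟩ := h2
  exact ⟨τ * σ, permAct_mul _ _ _⟩

lemma Iso_refl (f : K) : Iso f f := ⟨1, permAct_one f⟩

lemma D_permAct (σ : Equiv.Perm ℕ) (i : ℕ) (f : K) :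
    D (σ i) (permAct σ f) = permAct σ (D i f) := by
  obtain ⟨p, q, hq, -, rfl⟩ := exists_rep f
  have h1 := congrArg (permAct σ) (D_frac i p q hq)
  have hq2 : rename σ q ≠ 0 := by
    intro h0
    exact hq (rename_injective _ σ.injective (by rw [h0, map_zero]))
  have h2 := D_frac (σ i) (rename σ p) (rename σ q) hq2
  rw [map_mul, map_pow, permAct_toK, permAct_toK] at h1
  rw [map_div₀, permAct_toK, permAct_toK]
  apply mul_left_cancel₀ (pow_ne_zero 2 (toK_ne_zero hq2))
  rw [h1, h2]
  simp only [pderiv_rename σ.injective, map_sub, map_mul]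

lemma mem_Vars_permAct (σ : Equiv.Perm ℕ) (i : ℕ) (f : K) :
    σ i ∈ Vars (permAct σ f) ↔ i ∈ Vars f := by
  rw [mem_Vars, mem_Vars, D_permAct]
  simp

lemma Vars_permAct (σ : Equiv.Perm ℕ) (f : K) : Vars (permAct σ f) = σ '' Vars f := by
  ext j
  obtain ⟨i, rfl⟩ := σ.surjective j
  rw [mem_Vars_permAct]
  simp

lemma ncard_permAct (σ : Equiv.Perm ℕ) (f : K) :
    (Vars (permAct σ f)).ncard = (Vars f).ncard := by
  rw [Vars_permAct, Set.ncard_image_of_injective _ σ.injective]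

lemma disj_permAct (σ : Equiv.Perm ℕ) {f g : K} (h : Disjoint (Vars f) (Vars g)) :
    Disjoint (Vars (permAct σ f)) (Vars (permAct σ g)) := by
  rw [Vars_permAct, Vars_permAct]
  exact (Set.disjoint_image_iff σ.injective).2 h

lemma IsAE.perm (σ : Equiv.Perm ℕ) {f : K} (h : IsAE f) : IsAE (permAct σ f) := by
  induction h with
  | var i => rw [permAct_Xv]; exact IsAE.var _
  | add _ _ hd h1 h2 => rw [map_add]; exact IsAE.add h1 h2 (disj_permAct σ hd)
  | sub _ _ hd h1 h2 => rw [map_sub]; exact IsAE.sub h1 h2 (disj_permAct σ hd)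
  | mul _ _ hd h1 h2 => rw [map_mul]; exact IsAE.mul h1 h2 (disj_permAct σ hd)
  | div _ _ hd h1 h2 => rw [map_div₀]; exact IsAE.div h1 h2 (disj_permAct σ hd)

lemma IsAE.perm_iff (σ : Equiv.Perm ℕ) {f : K} : IsAE (permAct σ f) ↔ IsAE f :=
  ⟨fun h => by simpa [permAct_inv_self] using h.perm σ⁻¹, fun h => h.perm σ⟩

lemma FirstType.perm (σ : Equiv.Perm ℕ) {f : K} (h : FirstType f) : FirstType (permAct σ f) :=
  ⟨h.1.perm σ, fun h2 => h.2 (by rwa [← map_neg, IsAE.perm_iff] at h2)⟩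

lemma EndsWith.perm (σ : Equiv.Perm ℕ) {f : K} {o : Op} (h : EndsWith f o) :
    EndsWith (permAct σ f) o := by
  induction h with
  | var i => rw [permAct_Xv]; exact EndsWith.var _
  | add_base hij =>
    rw [map_add, permAct_Xv, permAct_Xv]; exact EndsWith.add_base (σ.injective.ne hij)
  | sub_base hij =>
    rw [map_sub, permAct_Xv, permAct_Xv]; exact EndsWith.sub_base (σ.injective.ne hij)
  | mul_base hij =>
    rw [map_mul, permAct_Xv, permAct_Xv]; exact EndsWith.mul_base (σ.injective.ne hij)
  | div_base hij =>
    rw [map_div₀, permAct_Xv, permAct_Xv]; exact EndsWith.div_base (σ.injective.ne hij)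
  | add_rec hg hh hd hn h1 h2 _ _ i1 i2 =>
    rw [← ncard_permAct σ] at hn
    rw [map_add] at hn ⊢
    exact EndsWith.add_rec (hg.perm σ) (hh.perm σ) (disj_permAct σ hd) hn h1 h2 i1 i2
  | mul_rec hg hh hd hn h1 h2 _ _ i1 i2 =>
    rw [← ncard_permAct σ] at hn
    rw [map_mul] at hn ⊢
    exact EndsWith.mul_rec (hg.perm σ) (hh.perm σ) (disj_permAct σ hd) hn h1 h2 i1 i2
  | div_rec hg hh hd hn h1 h2 _ _ i1 i2 =>
    rw [← ncard_permAct σ] at hn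
    rw [map_div₀] at hn ⊢
    exact EndsWith.div_rec (hg.perm σ) (hh.perm σ) (disj_permAct σ hd) hn h1 h2 i1 i2
  | sub_rec hg hh hd hn h1 h2 hF _ _ i1 i2 =>
    rw [← ncard_permAct σ] at hn
    rw [map_sub] at hn ⊢
    exact EndsWith.sub_rec (hg.perm σ) (hh.perm σ) (disj_permAct σ hd) hn h1 h2
      (hF.perm σ) i1 i2

lemma EndsIn.perm (σ : Equiv.Perm ℕ) {f : K} {s : Set Op} (h : EndsIn f s) :
    EndsIn (permAct σ f) s := by
  obtain ⟨o, ho, h⟩ := h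
  exact ⟨o, ho, h.perm σ⟩

lemma IsAE.nonempty {f : K} (h : IsAE f) : (Vars f).Nonempty := by
  induction h with
  | var i => rw [Vars_Xv]; exact Set.singleton_nonempty _
  | add _ _ hd h1 h2 => rw [Vars_add hd]; exact h1.inl
  | sub _ _ hd h1 h2 => rw [Vars_sub hd]; exact h1.inl
  | mul _ _ hd h1 h2 => rw [Vars_mul h1 h2 hd]; exact h1.inl
  | div _ _ hd h1 h2 => rw [Vars_div h1 h2 hd]; exact h1.inl

lemma union_not_singleton {A B : Set ℕ} (hA : A.Nonempty) (hB : B.Nonempty)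
    (hd : Disjoint A B) (i : ℕ) (h : A ∪ B = {i}) : False := by
  obtain ⟨a, ha⟩ := hA
  obtain ⟨b, hb⟩ := hB
  have h1 : a ∈ A ∪ B := Or.inl ha
  have h2 : b ∈ A ∪ B := Or.inr hb
  rw [h] at h1 h2
  rw [Set.mem_singleton_iff] at h1 h2
  subst h1; subst h2
  exact Set.disjoint_left.1 hd ha hb

lemma IsAE.single {f : K} (h : IsAE f) (i : ℕ) (hi : Vars f = {i}) : f = Xv i := by
  cases h with
  | var j => rw [Vars_Xv, Set.singleton_eq_singleton_iff] at hi; rw [hi]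
  | add h1 h2 hd =>
    rw [Vars_add hd] at hi; exact (union_not_singleton h1.nonempty h2.nonempty hd i hi).elim
  | sub h1 h2 hd =>
    rw [Vars_sub hd] at hi; exact (union_not_singleton h1.nonempty h2.nonempty hd i hi).elim
  | mul h1 h2 hd =>
    rw [Vars_mul h1.nonempty h2.nonempty hd] at hi
    exact (union_not_singleton h1.nonempty h2.nonempty hd i hi).elim
  | div h1 h2 hd =>
    rw [Vars_div h1.nonempty h2.nonempty hd] at hi
    exact (union_not_singleton h1.nonempty h2.nonempty hd i hi).elim

lemma D_Xv_self (i : ℕ) : D i (Xv i) = 1 := by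
  rw [Xv, D_toK, pderiv_X_self, map_one]

lemma neg_one_ne_one_K : (-1 : K) ≠ 1 := by
  intro h
  have : (2 : K) = 0 := by linear_combination -h
  exact two_ne_zero this

lemma FirstType_Xv (i : ℕ) : FirstType (Xv i) := by
  refine ⟨IsAE.var i, fun h => ?_⟩
  have h1 := congrArg (D i) (h.single i (by rw [Vars_neg, Vars_Xv]))
  rw [D_neg, D_Xv_self] at h1
  exact neg_one_ne_one_K h1

/-! ### Additively irreducible elements -/

/-- Plus or minus a variable, or a product of two non-constants in disjoint variables. -/
def Atom0 (a : K) : Prop :=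
  (∃ i, a = Xv i ∨ a = -Xv i) ∨
    ∃ u v, (Vars u).Nonempty ∧ (Vars v).Nonempty ∧ Disjoint (Vars u) (Vars v) ∧ a = u * v

lemma Atom0.nonempty {a : K} (h : Atom0 a) : (Vars a).Nonempty := by
  rcases h with ⟨i, rfl | rfl⟩ | ⟨u, v, hu, hv, hd, rfl⟩
  · rw [Vars_Xv]; exact Set.singleton_nonempty _
  · rw [Vars_neg, Vars_Xv]; exact Set.singleton_nonempty _
  · rw [Vars_mul hu hv hd]; exact hu.inl

lemma Atom0.neg {a : K} (h : Atom0 a) : Atom0 (-a) := by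
  rcases h with ⟨i, rfl | rfl⟩ | ⟨u, v, hu, hv, hd, rfl⟩
  · exact Or.inl ⟨i, Or.inr rfl⟩
  · exact Or.inl ⟨i, Or.inl (neg_neg _)⟩
  · exact Or.inr ⟨-u, v, by rwa [Vars_neg], hv, by rwa [Vars_neg], by ring⟩

lemma Atom0.perm (σ : Equiv.Perm ℕ) {a : K} (h : Atom0 a) : Atom0 (permAct σ a) := by
  rcases h with ⟨i, rfl | rfl⟩ | ⟨u, v, hu, hv, hd, rfl⟩
  · exact Or.inl ⟨σ i, Or.inl (permAct_Xv _ _)⟩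
  · exact Or.inl ⟨σ i, Or.inr (by rw [map_neg, permAct_Xv])⟩
  · exact Or.inr ⟨permAct σ u, permAct σ v, by rw [Vars_permAct]; exact hu.image _,
      by rw [Vars_permAct]; exact hv.image _, disj_permAct σ hd, map_mul _ _ _⟩

lemma D_of_disj {u v : K} (hd : Disjoint (Vars u) (Vars v)) {i : ℕ} (hi : i ∈ Vars u) :
    D i v = 0 := (disj_D hd i).resolve_left (mem_Vars.1 hi)

lemma D_mul_left {u v : K} (hd : Disjoint (Vars u) (Vars v)) {i : ℕ} (hi : i ∈ Vars u) :
    D i (u * v) = D i u * v := by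
  rw [D_mul, D_of_disj hd hi]; ring

lemma D_mul_right {u v : K} (hd : Disjoint (Vars u) (Vars v)) {j : ℕ} (hj : j ∈ Vars v) :
    D j (u * v) = u * D j v := by
  rw [D_mul, D_of_disj hd.symm hj]; ring

lemma DD_mul {u v : K} (hd : Disjoint (Vars u) (Vars v)) {i j : ℕ} (hi : i ∈ Vars u)
    (hj : j ∈ Vars v) : D i (D j (u * v)) = D i u * D j v := by
  rw [D_mul_right hd hj, D_mul, D_comm i j v, D_of_disj hd hi, D_zero]; ring

lemma Atom0.conn {a : K} (h : Atom0 a) (S : Set ℕ)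
    (hS : ∀ i ∈ S, ∀ j, D i (D j a) ≠ 0 → j ∈ S) {i : ℕ} (hi : i ∈ Vars a) (hiS : i ∈ S) :
    Vars a ⊆ S := by
  have key : ∀ u v : K, (Vars v).Nonempty → Disjoint (Vars u) (Vars v) → a = u * v →
      i ∈ Vars u → Vars u ∪ Vars v ⊆ S := by
    intro u v hv hd e hiu
    have h1 : Vars v ⊆ S := fun j hj => hS i hiS j (by
      rw [e, DD_mul hd hiu hj]
      exact mul_ne_zero (mem_Vars.1 hiu) (mem_Vars.1 hj))
    obtain ⟨j, hj⟩ := hv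
    refine Set.union_subset (fun k hk => hS j (h1 hj) k ?_) h1
    rw [D_comm, e, DD_mul hd hk hj]
    exact mul_ne_zero (mem_Vars.1 hk) (mem_Vars.1 hj)
  rcases h with ⟨k, h⟩ | ⟨u, v, hu, hv, hd, e⟩
  · have hV : Vars a = {k} := by
      rcases h with rfl | rfl
      · exact Vars_Xv k
      · rw [Vars_neg, Vars_Xv]
    rw [hV] at hi ⊢
    rw [Set.mem_singleton_iff] at hi
    subst hi
    simpa using hiS
  · have hV : Vars a = Vars u ∪ Vars v := by rw [e, Vars_mul hu hv hd]
    rw [hV] at hi ⊢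
    rcases hi with hi | hi
    · exact key u v hv hd e hi
    · rw [Set.union_comm]
      exact key v u hu hd.symm (by rw [e, mul_comm]) hi

/-- Two products of non-constants in disjoint variables cannot differ by a nonzero constant. -/
lemma prod_const_aux {u v u' v' : K} {c : ℝ}
    (hd : Disjoint (Vars u) (Vars v)) (hd' : Disjoint (Vars u') (Vars v'))
    (e : u * v = u' * v' + toK (C c)) (hc : c ≠ 0) {i j : ℕ} (hi : i ∈ Vars u) (hj : j ∈ Vars v)
    (hi' : i ∈ Vars u') (hj' : j ∈ Vars v') : False := by
  have e2 : u' * v' = u * v - toK (C c) := by rw [e]; ring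
  have d1 : D i (u' * v') = D i (u * v) := by rw [e2, D_sub, D_const, sub_zero]
  have d2 : D j (u' * v') = D j (u * v) := by rw [e2, D_sub, D_const, sub_zero]
  have d3 : D i (D j (u' * v')) = D i (D j (u * v)) := by rw [d2]
  rw [D_mul_left hd' hi', D_mul_left hd hi] at d1
  rw [D_mul_right hd' hj', D_mul_right hd hj] at d2
  rw [DD_mul hd' hi' hj', DD_mul hd hi hj] at d3
  have : toK (C c) * (D i u * D j v) = 0 := by
    linear_combination -(D i u * D j v) * e + u' * v' * d3 - (D j v' * u') * d1 - (D i u * v) * d2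
  rcases mul_eq_zero.1 this with h | h
  · exact toK_ne_zero (by simpa using hc) h
  · exact mul_ne_zero (mem_Vars.1 hi) (mem_Vars.1 hj) h

lemma prod_const {u v u' v' : K} {c : ℝ}
    (hu : (Vars u).Nonempty) (hv : (Vars v).Nonempty) (hd : Disjoint (Vars u) (Vars v))
    (hu' : (Vars u').Nonempty) (hv' : (Vars v').Nonempty) (hd' : Disjoint (Vars u') (Vars v'))
    (e : u * v = u' * v' + toK (C c)) : c = 0 := by
  by_contra hc
  have hV : Vars u ∪ Vars v = Vars u' ∪ Vars v' := by
    rw [← Vars_mul hu hv hd, ← Vars_mul hu' hv' hd', e]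
    ext i
    rw [mem_Vars, mem_Vars, D_add, D_const, add_zero]
  have k1 : ∀ i j, i ∈ Vars u → j ∈ Vars v → i ∈ Vars u' → j ∈ Vars v' → False :=
    fun i j a b c d => prod_const_aux hd hd' e hc a b c d
  have k2 : ∀ i j, i ∈ Vars u → j ∈ Vars v → i ∈ Vars v' → j ∈ Vars u' → False :=
    fun i j a b c d => prod_const_aux hd hd'.symm (by rw [e, mul_comm u']) hc a b c d
  have m : ∀ i, (i ∈ Vars u ∨ i ∈ Vars v) ↔ (i ∈ Vars u' ∨ i ∈ Vars v') := fun i =>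
    (Set.ext_iff.1 hV i)
  obtain ⟨a, ha⟩ := hu
  obtain ⟨b, hb⟩ := hv
  obtain ⟨k, hk⟩ := hu'
  obtain ⟨l, hl⟩ := hv'
  have ma := (m a).1 (Or.inl ha)
  have mb := (m b).1 (Or.inr hb)
  have mk := (m k).2 (Or.inl hk)
  have ml := (m l).2 (Or.inr hl)
  rcases ma with ma | ma <;> rcases mb with mb | mb <;> rcases mk with mk | mk <;>
    rcases ml with ml | ml <;>
    first
    | exact k1 a b ha hb ma mb
    | exact k2 a b ha hb ma mb
    | exact k1 a l ha ml ma hl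
    | exact k2 l b ml hb hl mb
    | exact k1 k b mk hb hk mb
    | exact k2 a k ha mk ma hk

lemma Atom0.const {a b : K} {c : ℝ} (ha : Atom0 a) (hb : Atom0 b) (e : a = b + toK (C c)) :
    a = b := by
  have hD : ∀ k, D k a = D k b := by intro k; rw [e, D_add, D_const, add_zero]
  have hV : Vars a = Vars b := by ext k; rw [mem_Vars, mem_Vars, hD]
  have single : ∀ {x : K} {i : ℕ}, (x = Xv i ∨ x = -Xv i) → Vars x = {i} := by
    rintro x i (rfl | rfl)
    · exact Vars_Xv i
    · rw [Vars_neg, Vars_Xv]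
  rcases ha with ⟨i, ha⟩ | ⟨u, v, hu, hv, hd, rfl⟩
  · rcases hb with ⟨j, hb⟩ | ⟨u', v', hu', hv', hd', rfl⟩
    · have hij : i = j := by
        rw [single ha, single hb, Set.singleton_eq_singleton_iff] at hV; exact hV
      subst hij
      have h := hD i
      rcases ha with rfl | rfl <;> rcases hb with rfl | rfl
      · rfl
      · rw [D_neg, D_Xv_self] at h; exact absurd h.symm neg_one_ne_one_K
      · rw [D_neg, D_Xv_self] at h; exact absurd h neg_one_ne_one_K
      · rfl
    · rw [single ha, Vars_mul hu' hv' hd'] at hV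
      exact (union_not_singleton hu' hv' hd' i hV.symm).elim
  · rcases hb with ⟨j, hb⟩ | ⟨u', v', hu', hv', hd', rfl⟩
    · rw [single hb, Vars_mul hu hv hd] at hV
      exact (union_not_singleton hu hv hd j hV).elim
    · have := prod_const hu hv hd hu' hv' hd' e
      rw [e, this, map_zero, map_zero, add_zero]

open scoped Classical in
/-- `f` is the sum of the atoms in `S`, which have pairwise disjoint variables. -/
structure Rep0 (f : K) (S : Finset K) : Prop where
  atom : ∀ a ∈ S, Atom0 a
  disj : ∀ a ∈ S, ∀ b ∈ S, a ≠ b → Disjoint (Vars a) (Vars b)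
  sum : f = ∑ a ∈ S, a

lemma Rep0.D_eq {f : K} {S : Finset K} (h : Rep0 f S) {a : K} (ha : a ∈ S) {i : ℕ}
    (hi : i ∈ Vars a) : D i f = D i a := by
  rw [h.sum, D_sum]
  refine Finset.sum_eq_single a (fun b hb hne => ?_) (fun h => absurd ha h)
  exact D_of_disj (h.disj a ha b hb hne.symm) hi

lemma Rep0.exists_mem {f : K} {S : Finset K} (h : Rep0 f S) {i : ℕ}
    (hi : i ∈ Vars f) : ∃ a ∈ S, i ∈ Vars a := by
  rw [mem_Vars, h.sum, D_sum] at hi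
  obtain ⟨a, ha, h2⟩ := Finset.exists_ne_zero_of_sum_ne_zero hi
  exact ⟨a, ha, mem_Vars.2 h2⟩

lemma Rep0.subset_Vars {f : K} {S : Finset K} (h : Rep0 f S) {a : K} (ha : a ∈ S) :
    Vars a ⊆ Vars f := by
  intro i hi
  rw [mem_Vars, h.D_eq ha hi]
  exact mem_Vars.1 hi

lemma Rep0.Vars_subset {f : K} {S T : Finset K} (hS : Rep0 f S) (hT : Rep0 f T) {a b : K}
    (ha : a ∈ S) (hb : b ∈ T) {i : ℕ} (hia : i ∈ Vars a) (hib : i ∈ Vars b) :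
    Vars a ⊆ Vars b := by
  refine (hS.atom a ha).conn (Vars b) (fun k hk j hj => ?_) hia hib
  rw [D_comm] at hj
  have hka : k ∈ Vars a := by
    rw [mem_Vars]; intro h0; rw [h0, D_zero] at hj; exact hj rfl
  rw [← hS.D_eq ha hka, hT.D_eq hb hk, D_comm] at hj
  rw [mem_Vars]; intro h0; rw [h0, D_zero] at hj; exact hj rfl

lemma Rep0.subset {f : K} {S T : Finset K} (hS : Rep0 f S) (hT : Rep0 f T) : S ⊆ T := by
  intro a ha
  obtain ⟨i, hi⟩ := (hS.atom a ha).nonempty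
  obtain ⟨b, hb, hib⟩ := hT.exists_mem (hS.subset_Vars ha hi)
  have hV : Vars a = Vars b :=
    (hS.Vars_subset hT ha hb hi hib).antisymm (hT.Vars_subset hS hb ha hib hi)
  have hD : ∀ k, D k (a - b) = 0 := by
    intro k
    rw [D_sub]
    by_cases hk : k ∈ Vars a
    · rw [← hS.D_eq ha hk, hT.D_eq hb (hV ▸ hk), sub_self]
    · rw [not_mem_Vars.1 hk, not_mem_Vars.1 (hV ▸ hk), sub_self]
  obtain ⟨c, hc⟩ := const_of_Vars hD
  have : a = b := (hS.atom a ha).const (hT.atom b hb) (c := c) (by rw [← hc]; ring)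
  rwa [this]

lemma Rep0.unique {f : K} {S T : Finset K} (hS : Rep0 f S) (hT : Rep0 f T) : S = T :=
  (hS.subset hT).antisymm (hT.subset hS)

open scoped Classical in
lemma Rep0.add {f g : K} {S T : Finset K} (hS : Rep0 f S) (hT : Rep0 g T)
    (hd : Disjoint (Vars f) (Vars g)) : Rep0 (f + g) (S ∪ T) := by
  have hST : ∀ a ∈ S, ∀ b ∈ T, Disjoint (Vars a) (Vars b) := fun a ha b hb =>
    hd.mono (hS.subset_Vars ha) (hT.subset_Vars hb)
  refine ⟨?_, ?_, ?_⟩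
  · intro a ha
    rcases Finset.mem_union.1 ha with h | h
    · exact hS.atom a h
    · exact hT.atom a h
  · intro a ha b hb hne
    rcases Finset.mem_union.1 ha with h | h <;> rcases Finset.mem_union.1 hb with h' | h'
    · exact hS.disj a h b h' hne
    · exact hST a h b h'
    · exact (hST b h' a h).symm
    · exact hT.disj a h b h' hne
  · rw [Finset.sum_union, ← hS.sum, ← hT.sum]
    rw [Finset.disjoint_left]
    intro a ha hb
    obtain ⟨i, hi⟩ := (hS.atom a ha).nonempty
    exact Set.disjoint_left.1 (hST a ha a hb) hi hi

open scoped Classical in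
lemma Rep0.neg {f : K} {S : Finset K} (hS : Rep0 f S) : Rep0 (-f) (S.image (fun a => -a)) := by
  refine ⟨?_, ?_, ?_⟩
  · intro a ha
    obtain ⟨b, hb, rfl⟩ := Finset.mem_image.1 ha
    exact (hS.atom b hb).neg
  · intro a ha b hb hne
    obtain ⟨a', ha', rfl⟩ := Finset.mem_image.1 ha
    obtain ⟨b', hb', rfl⟩ := Finset.mem_image.1 hb
    rw [Vars_neg, Vars_neg]
    exact hS.disj _ ha' _ hb' (fun e => hne (by rw [e]))
  · rw [Finset.sum_image (fun a _ b _ e => neg_injective e), Finset.sum_neg_distrib, ← hS.sum]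

open scoped Classical in
lemma Rep0.perm (σ : Equiv.Perm ℕ) {f : K} {S : Finset K} (hS : Rep0 f S) :
    Rep0 (permAct σ f) (S.image (permAct σ)) := by
  refine ⟨?_, ?_, ?_⟩
  · intro a ha
    obtain ⟨b, hb, rfl⟩ := Finset.mem_image.1 ha
    exact (hS.atom b hb).perm σ
  · intro a ha b hb hne
    obtain ⟨a', ha', rfl⟩ := Finset.mem_image.1 ha
    obtain ⟨b', hb', rfl⟩ := Finset.mem_image.1 hb
    exact disj_permAct σ (hS.disj _ ha' _ hb' (fun e => hne (by rw [e])))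
  · rw [Finset.sum_image (fun a _ b _ e => (permAct σ).injective e), ← map_sum, ← hS.sum]

lemma Rep0.mono {f : K} {S T : Finset K} (hS : Rep0 f S) (h : T ⊆ S) : Rep0 (∑ a ∈ T, a) T :=
  ⟨fun a ha => hS.atom a (h ha), fun a ha b hb => hS.disj a (h ha) b (h hb), rfl⟩

lemma Rep0.disj_sum {f : K} {S T U : Finset K} (hS : Rep0 f S) (h : T ⊆ S) (h' : U ⊆ S)
    (hTU : Disjoint T U) : Disjoint (Vars (∑ a ∈ T, a)) (Vars (∑ a ∈ U, a)) := by
  rw [Set.disjoint_left]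
  intro i hi hi'
  obtain ⟨a, ha, hia⟩ := (hS.mono h).exists_mem hi
  obtain ⟨b, hb, hib⟩ := (hS.mono h').exists_mem hi'
  refine Set.disjoint_left.1 (hS.disj a (h ha) b (h' hb) ?_) hia hib
  rintro rfl
  exact Finset.disjoint_left.1 hTU ha hb

/-- The operators `+, ×, ÷`. -/
abbrev O3 : Set Op := {Op.add, Op.mul, Op.div}

lemma mem_O3 {o : Op} : o ∈ O3 ↔ o ≠ Op.sub := by
  cases o <;> simp [O3]

/-- `f` is the sum of the AE atoms ending with `+,×,÷` in the nonempty set `S`. -/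
structure AERep (f : K) (S : Finset K) : Prop extends Rep0 f S where
  ae : ∀ a ∈ S, IsAE a ∧ EndsIn a O3
  ne : S.Nonempty

lemma EndsWith.isAE {f : K} {o : Op} (h : EndsWith f o) : IsAE f := by
  have hX : ∀ {i j : ℕ}, i ≠ j → Disjoint (Vars (Xv i)) (Vars (Xv j)) := by
    intro i j h; rw [Vars_Xv, Vars_Xv]; simpa using h
  cases h with
  | var i => exact IsAE.var i
  | add_base hij => exact IsAE.add (IsAE.var _) (IsAE.var _) (hX hij)
  | sub_base hij => exact IsAE.sub (IsAE.var _) (IsAE.var _) (hX hij)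
  | mul_base hij => exact IsAE.mul (IsAE.var _) (IsAE.var _) (hX hij)
  | div_base hij => exact IsAE.div (IsAE.var _) (IsAE.var _) (hX hij)
  | add_rec hg hh hd => exact IsAE.add hg hh hd
  | mul_rec hg hh hd => exact IsAE.mul hg hh hd
  | div_rec hg hh hd => exact IsAE.div hg hh hd
  | sub_rec hg hh hd => exact IsAE.sub hg hh hd

lemma AERep.singleton {a : K} (h : Atom0 a) {o : Op} (ho : o ≠ Op.sub) (he : EndsWith a o) :
    AERep a {a} where
  atom := by simpa using h
  disj := by
    intro x hx y hy hne
    rw [Finset.mem_singleton] at hx hy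
    exact absurd (hx.trans hy.symm) hne
  sum := by simp
  ae := by
    intro x hx
    rw [Finset.mem_singleton] at hx
    subst hx
    exact ⟨he.isAE, o, mem_O3.2 ho, he⟩
  ne := Finset.singleton_nonempty a

open scoped Classical in
lemma AERep.add {f g : K} {S T : Finset K} (hS : AERep f S) (hT : AERep g T)
    (hd : Disjoint (Vars f) (Vars g)) : AERep (f + g) (S ∪ T) where
  toRep0 := hS.toRep0.add hT.toRep0 hd
  ae := by
    intro a ha
    rcases Finset.mem_union.1 ha with h | h
    · exact hS.ae a h
    · exact hT.ae a h
  ne := hS.ne.inl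

lemma disj_Xv {i j : ℕ} (h : i ≠ j) : Disjoint (Vars (Xv i)) (Vars (Xv j)) := by
  rw [Vars_Xv, Vars_Xv]; simpa using h

lemma exists_AERep {f : K} {o : Op} (h : EndsWith f o) (ho : o ≠ Op.sub) : ∃ S, AERep f S := by
  have hX : ∀ i, (Vars (Xv i)).Nonempty := fun i => (IsAE.var i).nonempty
  have hdiv : ∀ {u v : K}, (Vars u).Nonempty → (Vars v).Nonempty → Disjoint (Vars u) (Vars v) →
      Atom0 (u / v) := fun {u v} hu hv hd => Or.inr ⟨u, v⁻¹, hu, by rwa [Vars_inv],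
        by rwa [Vars_inv], div_eq_mul_inv _ _⟩
  induction h with
  | var i => exact ⟨_, AERep.singleton (Or.inl ⟨i, Or.inl rfl⟩) ho (EndsWith.var i)⟩
  | @add_base i j hij =>
    exact ⟨_, (AERep.singleton (Or.inl ⟨i, Or.inl rfl⟩) (by decide) (EndsWith.var i)).add
      (AERep.singleton (Or.inl ⟨j, Or.inl rfl⟩) (by decide) (EndsWith.var j)) (disj_Xv hij)⟩
  | sub_base hij => exact absurd rfl ho
  | @mul_base i j hij =>
    exact ⟨_, AERep.singleton (Or.inr ⟨_, _, hX i, hX j, disj_Xv hij, rfl⟩) ho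
      (EndsWith.mul_base hij)⟩
  | @div_base i j hij =>
    exact ⟨_, AERep.singleton (hdiv (hX i) (hX j) (disj_Xv hij)) ho (EndsWith.div_base hij)⟩
  | add_rec hg hh hd hn h1 h2 _ _ i1 i2 =>
    obtain ⟨S, hS⟩ := i1 h1
    obtain ⟨T, hT⟩ := i2 h2
    exact ⟨_, hS.add hT hd⟩
  | mul_rec hg hh hd hn h1 h2 e1 e2 i1 i2 =>
    exact ⟨_, AERep.singleton (Or.inr ⟨_, _, hg.nonempty, hh.nonempty, hd, rfl⟩) ho
      (EndsWith.mul_rec hg hh hd hn h1 h2 e1 e2)⟩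
  | div_rec hg hh hd hn h1 h2 e1 e2 i1 i2 =>
    exact ⟨_, AERep.singleton (hdiv hg.nonempty hh.nonempty hd) ho
      (EndsWith.div_rec hg hh hd hn h1 h2 e1 e2)⟩
  | sub_rec => exact absurd rfl ho

lemma EndsIn.exists_AERep {f : K} (h : EndsIn f O3) : ∃ S, AERep f S := by
  obtain ⟨o, ho, h⟩ := h
  exact _root_.exists_AERep h (mem_O3.1 ho)

lemma IsAE.ncard_pos {f : K} (h : IsAE f) : 1 ≤ (Vars f).ncard :=
  (Set.ncard_pos (Vars_finite f)).2 h.nonempty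

lemma EndsIn.add {g h : K} (hg : IsAE g) (hh : IsAE h) (hd : Disjoint (Vars g) (Vars h))
    (eg : EndsIn g O3) (eh : EndsIn h O3) : EndsIn (g + h) O3 := by
  obtain ⟨o1, ho1, e1⟩ := eg
  obtain ⟨o2, ho2, e2⟩ := eh
  refine ⟨Op.add, by simp [O3], ?_⟩
  have hcard : (Vars (g + h)).ncard = (Vars g).ncard + (Vars h).ncard := by
    rw [Vars_add hd, Set.ncard_union_eq hd (Vars_finite g) (Vars_finite h)]
  by_cases h3 : 3 ≤ (Vars (g + h)).ncard
  · exact EndsWith.add_rec hg hh hd h3 (mem_O3.1 ho1) (mem_O3.1 ho2) e1 e2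
  · have p1 := hg.ncard_pos
    have p2 := hh.ncard_pos
    obtain ⟨i, hi⟩ := Set.ncard_eq_one.1 (show (Vars g).ncard = 1 by omega)
    obtain ⟨j, hj⟩ := Set.ncard_eq_one.1 (show (Vars h).ncard = 1 by omega)
    rw [hi, hj] at hd
    rw [hg.single i hi, hh.single j hj]
    exact EndsWith.add_base (by simpa using hd)

lemma AERep.isAE_endsIn {f : K} {S : Finset K} (h : AERep f S) : IsAE f ∧ EndsIn f O3 := by
  obtain ⟨h0, hae, hne⟩ := h
  rw [h0.sum]
  replace h0 := h0.mono (subset_refl S)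
  revert h0 hae
  induction hne using Finset.Nonempty.cons_induction with
  | singleton a => intro hae _; simpa using hae a (by simp)
  | cons a s has hs ih =>
    intro hae h0
    have hsub : s ⊆ Finset.cons a s has := Finset.subset_cons has
    obtain ⟨i1, i2⟩ := ih (fun b hb => hae b (hsub hb)) (h0.mono hsub)
    have hd := h0.disj_sum (T := {a}) (by simp) hsub (by simpa using has)
    rw [Finset.sum_singleton] at hd
    obtain ⟨j1, j2⟩ := hae a (by simp)
    rw [Finset.sum_cons]
    exact ⟨IsAE.add j1 i1 hd, EndsIn.add j1 i1 hd j2 i2⟩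

lemma AERep.mono {f : K} {S T : Finset K} (hS : AERep f S) (h : T ⊆ S) (hT : T.Nonempty) :
    AERep (∑ a ∈ T, a) T :=
  ⟨hS.toRep0.mono h, fun a ha => hS.ae a (h ha), hT⟩

open scoped Classical in
lemma AERep.perm (σ : Equiv.Perm ℕ) {f : K} {S : Finset K} (hS : AERep f S) :
    AERep (permAct σ f) (S.image (permAct σ)) where
  toRep0 := hS.toRep0.perm σ
  ae := by
    intro a ha
    obtain ⟨b, hb, rfl⟩ := Finset.mem_image.1 ha
    exact ⟨(hS.ae b hb).1.perm σ, (hS.ae b hb).2.perm σ⟩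
  ne := hS.ne.image _

/-- If `g + h` is of the first type, so is `g`. -/
lemma FirstType.left {g h : K} (hg : IsAE g) (hh : IsAE h) (hd : Disjoint (Vars g) (Vars h))
    (hF : FirstType (g + h)) : FirstType g := by
  refine ⟨hg, fun hn => hF.2 ?_⟩
  have : -(g + h) = -g - h := by ring
  rw [this]
  exact IsAE.sub hn hh (by rwa [Vars_neg])

open scoped Classical in
lemma AERep.first {f : K} {S : Finset K} (hS : AERep f S) (hF : FirstType f) :
    ∀ a ∈ S, ¬ IsAE (-a) := by
  intro a ha
  by_cases hne : (S.erase a).Nonempty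
  · have hr := (hS.mono (Finset.erase_subset a S) hne)
    have hd := hS.toRep0.disj_sum (T := {a}) (by simpa using ha) (Finset.erase_subset a S) (by simp)
    rw [Finset.sum_singleton] at hd
    rw [hS.sum, ← Finset.add_sum_erase S _ ha] at hF
    exact (FirstType.left (hS.ae a ha).1 hr.isAE_endsIn.1 hd hF).2
  · rw [Finset.not_nonempty_iff_eq_empty] at hne
    have : f = a := by
      rw [hS.sum, ← Finset.add_sum_erase S _ ha, hne, Finset.sum_empty, add_zero]
    rw [← this]
    exact hF.2

open scoped Classical in
lemma AERep.sub {g h : K} {A B : Finset K} (hA : AERep g A) (hB : AERep h B)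
    (hd : Disjoint (Vars g) (Vars h)) : Rep0 (g - h) (A ∪ B.image (fun b => -b)) := by
  rw [sub_eq_add_neg]
  exact hA.toRep0.add hB.toRep0.neg (by rwa [Vars_neg])

/-- Uniqueness of the decomposition `g - h`. -/
lemma sub_unique {g h g' h' : K} (eg : EndsIn g O3) (eh : EndsIn h O3) (eg' : EndsIn g' O3)
    (eh' : EndsIn h' O3) (hF : FirstType h) (hF' : FirstType h')
    (hd : Disjoint (Vars g) (Vars h)) (hd' : Disjoint (Vars g') (Vars h'))
    (e : g - h = g' - h') : g = g' ∧ h = h' := by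
  classical
  suffices hs : ∀ {g h g' h' : K}, EndsIn g O3 → EndsIn h O3 → EndsIn g' O3 →
      EndsIn h' O3 → FirstType h → FirstType h' → Disjoint (Vars g) (Vars h) →
      Disjoint (Vars g') (Vars h') → g - h = g' - h' →
      ∀ A A', AERep g A → AERep g' A' → A ⊆ A' by
    obtain ⟨A, hA⟩ := eg.exists_AERep
    obtain ⟨A', hA'⟩ := eg'.exists_AERep
    have : A = A' := (hs eg eh eg' eh' hF hF' hd hd' e A A' hA hA').antisymm
      (hs eg' eh' eg eh hF' hF hd' hd e.symm A' A hA' hA)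
    have hgg : g = g' := by rw [hA.sum, hA'.sum, this]
    refine ⟨hgg, ?_⟩
    rw [hgg] at e
    exact sub_right_injective e
  intro g h g' h' eg eh eg' eh' hF hF' hd hd' e A A' hA hA' a ha
  obtain ⟨B, hB⟩ := eh.exists_AERep
  obtain ⟨B', hB'⟩ := eh'.exists_AERep
  have h1 := hA.sub hB hd
  have h2 := hA'.sub hB' hd'
  rw [← e] at h2
  have hm := h1.subset h2 (Finset.mem_union_left _ ha)
  rcases Finset.mem_union.1 hm with h | h
  · exact h
  · obtain ⟨b, hb, rfl⟩ := Finset.mem_image.1 h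
    exact absurd (hA.ae _ ha).1 (hB'.first hF' b hb)

lemma iso_sub_unique {f g h g' h' : K} (eg : EndsIn g O3) (eh : EndsIn h O3)
    (eg' : EndsIn g' O3) (eh' : EndsIn h' O3) (hF : FirstType h) (hF' : FirstType h')
    (hd : Disjoint (Vars g) (Vars h)) (hd' : Disjoint (Vars g') (Vars h'))
    (i1 : Iso f (g - h)) (i2 : Iso f (g' - h')) :
    ∃ ρ, permAct ρ g = g' ∧ permAct ρ h = h' := by
  obtain ⟨ρ, hρ⟩ := Iso_trans (Iso_symm i1) i2
  rw [map_sub] at hρ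
  exact ⟨ρ, sub_unique (eg.perm ρ) (eh.perm ρ) eg' eh' (hF.perm ρ) hF' (disj_permAct ρ hd) hd' hρ⟩

lemma sub_inv {f : K} (h : EndsWith f Op.sub) : ∃ g h, IsAE g ∧ EndsIn g O3 ∧ FirstType h ∧
    EndsIn h O3 ∧ Disjoint (Vars g) (Vars h) ∧ f = g - h := by
  generalize ho : Op.sub = o at h
  cases h with
  | @sub_base i j hij =>
    exact ⟨Xv i, Xv j, IsAE.var i, ⟨Op.mul, by simp [O3], EndsWith.var i⟩, FirstType_Xv j,
      ⟨Op.mul, by simp [O3], EndsWith.var j⟩, disj_Xv hij, rfl⟩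
  | sub_rec hg hh hd hn h1 h2 hF e1 e2 =>
    exact ⟨_, _, hg, ⟨_, mem_O3.2 h1, e1⟩, hF, ⟨_, mem_O3.2 h2, e2⟩, hd, rfl⟩
  | _ => exact absurd ho (by decide)

lemma ncard_sub {g h : K} (hd : Disjoint (Vars g) (Vars h)) :
    (Vars (g - h)).ncard = (Vars g).ncard + (Vars h).ncard := by
  rw [Vars_sub hd, Set.ncard_union_eq hd (Vars_finite g) (Vars_finite h)]

lemma ncard_add {g h : K} (hd : Disjoint (Vars g) (Vars h)) :
    (Vars (g + h)).ncard = (Vars g).ncard + (Vars h).ncard := by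
  rw [Vars_add hd, Set.ncard_union_eq hd (Vars_finite g) (Vars_finite h)]

lemma ncard_AEn {n : ℕ} {f : K} (hf : f ∈ AEn n) : (Vars f).ncard = n := by
  rw [hf.2]
  have : varsUpTo n = ((Finset.Icc 1 n : Finset ℕ) : Set ℕ) := by
    ext i; simp [varsUpTo]
  rw [this, Set.ncard_coe_finset]
  simp

open scoped Classical in
/-- If `g ≅ -g`, every component of `g` has its negative in `𝒜`. -/
lemma AERep.third {g : K} {A : Finset K} (hA : AERep g A) (h : Iso g (-g)) :
    ∀ a ∈ A, IsAE (-a) := by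
  obtain ⟨σ, hσ⟩ := h
  intro a ha
  have h1 := (hA.perm σ).toRep0
  rw [hσ] at h1
  have h2 : -a ∈ A.image (permAct σ) := by
    rw [h1.unique hA.toRep0.neg]
    exact Finset.mem_image_of_mem _ ha
  exact ((hA.perm σ).ae _ h2).1

open scoped Classical in
lemma third_existence {g h : K} (eg : EndsIn g O3) (eh : EndsIn h O3)
    (hF : FirstType h) (hd : Disjoint (Vars g) (Vars h)) (hiso : Iso (g - h) (-(g - h))) :
    Iso g h ∨ ∃ g₀ G, g = g₀ + G ∧ Disjoint (Vars g₀) (Vars G) ∧ ThirdType g₀ ∧ EndsIn g₀ O3 ∧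
      Iso G h ∧ EndsIn G O3 := by
  obtain ⟨A, hA⟩ := eg.exists_AERep
  obtain ⟨B, hB⟩ := eh.exists_AERep
  obtain ⟨σ, hσ⟩ := hiso
  have hBF := hB.first hF
  have hS := hA.sub hB hd
  have e1 := hS.perm σ
  rw [hσ] at e1
  have e := e1.unique hS.neg
  have mem : ∀ x, x ∈ A ∪ B.image (fun b => -b) → permAct σ x ∈ B ∨ -permAct σ x ∈ A := by
    intro x hx
    have h1 := Finset.mem_image_of_mem (permAct σ) hx
    rw [e] at h1
    obtain ⟨y, hy, hyx⟩ := Finset.mem_image.1 h1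
    rcases Finset.mem_union.1 hy with h | h
    · right; rw [← hyx, neg_neg]; exact h
    · left
      obtain ⟨b, hb, rfl⟩ := Finset.mem_image.1 h
      rw [← hyx, neg_neg]; exact hb
  set A₁ := A.filter (fun a => ¬ IsAE (-a)) with hA₁
  set A₀ := A.filter (fun a => IsAE (-a)) with hA₀
  have s1 : A₁.image (permAct σ) ⊆ B := by
    intro x hx
    obtain ⟨a, ha, rfl⟩ := Finset.mem_image.1 hx
    rw [hA₁, Finset.mem_filter] at ha
    rcases mem a (Finset.mem_union_left _ ha.1) with h | h
    · exact h
    · have := (hA.ae _ h).1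
      rw [← map_neg, IsAE.perm_iff] at this
      exact absurd this ha.2
  have s2 : B.image (permAct σ) ⊆ A₁ := by
    intro x hx
    obtain ⟨b, hb, rfl⟩ := Finset.mem_image.1 hx
    rcases mem (-b) (Finset.mem_union_right _ (Finset.mem_image_of_mem _ hb)) with h | h
    · have := (hB.ae _ h).1
      rw [IsAE.perm_iff] at this
      exact absurd this (hBF b hb)
    · rw [map_neg, neg_neg] at h
      rw [hA₁, Finset.mem_filter]
      refine ⟨h, fun h2 => hBF b hb ?_⟩
      rwa [← map_neg, IsAE.perm_iff] at h2
  have c1 : (A₁.image (permAct σ)).card = A₁.card :=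
    Finset.card_image_of_injective _ (permAct σ).injective
  have c2 : (B.image (permAct σ)).card = B.card :=
    Finset.card_image_of_injective _ (permAct σ).injective
  have l1 := Finset.card_le_card s1
  have l2 := Finset.card_le_card s2
  have t1 : A₁.image (permAct σ) = B := Finset.eq_of_subset_of_card_le s1 (by omega)
  have t2 : B.image (permAct σ) = A₁ := Finset.eq_of_subset_of_card_le s2 (by omega)
  have hne : A₁.Nonempty := by rw [← t2]; exact hB.ne.image _
  have sub1 : A₁ ⊆ A := Finset.filter_subset _ _
  have sub0 : A₀ ⊆ A := Finset.filter_subset _ _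
  have hG := hA.mono sub1 hne
  have g1 : permAct σ (∑ a ∈ A₁, a) = h := by
    rw [(hG.perm σ).sum, t1, ← hB.sum]
  have g2 : permAct σ h = ∑ a ∈ A₁, a := by
    rw [(hB.perm σ).sum, t2]
  have hsum : g = ∑ a ∈ A₀, a + ∑ a ∈ A₁, a := by
    rw [hA₀, hA₁, Finset.sum_filter_add_sum_filter_not, ← hA.sum]
  rcases A₀.eq_empty_or_nonempty with h0 | h0
  · left
    rw [h0, Finset.sum_empty, zero_add] at hsum
    exact ⟨σ, by rw [hsum, g1]⟩
  · right
    have hR0 := hA.mono sub0 h0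
    have hneg : permAct σ (∑ a ∈ A₀, a) = -∑ a ∈ A₀, a := by
      rw [map_sub, hsum, map_add, g1, g2] at hσ
      linear_combination hσ
    refine ⟨_, _, hsum, ?_, ⟨hR0.isAE_endsIn.1, ?_, ⟨σ, hneg⟩⟩, hR0.isAE_endsIn.2, ⟨σ, g1⟩,
      hG.isAE_endsIn.2⟩
    · refine hA.toRep0.disj_sum sub0 sub1 ?_
      exact Finset.disjoint_filter_filter_not _ _ _
    · rw [← hneg]; exact hR0.isAE_endsIn.1.perm σ

open scoped Classical in
/-- `g` of the third type can be recovered from `g + h`, `h` of the first type. -/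
lemma third_add_unique {g h g' h' : K} (eg : EndsIn g O3) (eh : EndsIn h O3)
    (eg' : EndsIn g' O3) (eh' : EndsIn h' O3) (hF : FirstType h) (hF' : FirstType h')
    (hT : ThirdType g) (hT' : ThirdType g')
    (hd : Disjoint (Vars g) (Vars h)) (hd' : Disjoint (Vars g') (Vars h'))
    (e : g + h = g' + h') : g = g' := by
  obtain ⟨A, hA⟩ := eg.exists_AERep
  obtain ⟨B, hB⟩ := eh.exists_AERep
  obtain ⟨A', hA'⟩ := eg'.exists_AERep
  obtain ⟨B', hB'⟩ := eh'.exists_AERep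
  have h1 := (hA.add hB hd).toRep0
  have h2 := (hA'.add hB' hd').toRep0
  rw [← e] at h2
  have h3 := h1.unique h2
  have : A = A' := by
    apply Finset.Subset.antisymm
    · intro a ha
      have hm : a ∈ A' ∪ B' := h3 ▸ Finset.mem_union_left _ ha
      rcases Finset.mem_union.1 hm with h | h
      · exact h
      · exact absurd (hA.third hT.2.2 a ha) (hB'.first hF' a h)
    · intro a ha
      have hm : a ∈ A ∪ B := h3 ▸ Finset.mem_union_left _ ha
      rcases Finset.mem_union.1 hm with h | h
      · exact h
      · exact absurd (hA'.third hT'.2.2 a ha) (hB.first hF a h)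
  rw [hA.sum, hA'.sum, this]

lemma FirstType.iso {f g : K} (h : FirstType f) (i : Iso f g) : FirstType g := by
  obtain ⟨σ, rfl⟩ := i; exact h.perm σ

lemma EndsIn.iso {f g : K} {s : Set Op} (h : EndsIn f s) (i : Iso f g) : EndsIn g s := by
  obtain ⟨σ, rfl⟩ := i; exact h.perm σ

lemma ncard_iso {f g : K} (i : Iso f g) : (Vars f).ncard = (Vars g).ncard := by
  obtain ⟨σ, rfl⟩ := i; exact (ncard_permAct σ f).symm

lemma disj_add {f g h : K} (hd : Disjoint (Vars f) (Vars g)) (h1 : Disjoint (Vars f) (Vars h))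
    (h2 : Disjoint (Vars g) (Vars h)) : Disjoint (Vars (f + g)) (Vars h) := by
  rw [Vars_add hd]; exact Set.disjoint_union_left.2 ⟨h1, h2⟩

/-- For `n ≥ 2`: (i) every class `[f] ∈ 𝒜̄ₙ(−)` can be expressed
uniquely as `[g] − [h]` with `g ∈ 𝒜_k(+,×,÷)`, `h ∈ ℱ_{n−k}(+,×,÷)`, `1 ≤ k ≤ n−1`;
(ii) every class `[f] ∈ 𝒞̄ₙ(−)` can be expressed uniquely either as `[h] − [h]` with
`h ∈ ℱ_{n/2}(+,×,÷)` or as `[g] + [h] − [h]` with `g ∈ 𝒞_{n−2k}(+,×,÷)`,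
`h ∈ ℱ_k(+,×,÷)`, `1 ≤ k < n/2`. -/
theorem class_sub_decomposition (n : ℕ) (hn : 2 ≤ n) :
    (∀ f : K, f ∈ AEn n → EndsWith f Op.sub →
      ((∃ g h : K, ClassSubDecomp n f g h) ∧
       ∀ g h g' h' : K, ClassSubDecomp n f g h → ClassSubDecomp n f g' h' →
         Iso g g' ∧ Iso h h')) ∧
    (∀ f : K, f ∈ AEn n → ThirdType f → EndsWith f Op.sub →
      (((∃ h h' : K, CSubFormA n f h h') ∨ (∃ g h h' : K, CSubFormB n f g h h')) ∧
       ¬ ((∃ h h' : K, CSubFormA n f h h') ∧ (∃ g h h' : K, CSubFormB n f g h h')) ∧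
       (∀ h h' k k' : K, CSubFormA n f h h' → CSubFormA n f k k' → Iso h k) ∧
       (∀ g h h' g₂ h₂ h₂' : K, CSubFormB n f g h h' → CSubFormB n f g₂ h₂ h₂' →
         Iso g g₂ ∧ Iso h h₂))) := by
  refine ⟨fun f hf he => ⟨?_, ?_⟩, fun f hf hT he => ⟨?_, ?_, ?_, ?_⟩⟩
  · obtain ⟨g, h, hg, eg, hF, eh, hd, rfl⟩ := sub_inv he
    have hc := ncard_AEn hf
    rw [ncard_sub hd] at hc
    have p1 := hg.ncard_pos
    have p2 := hF.1.ncard_pos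
    exact ⟨g, h, hg, eg, hF, eh, hd, Iso_refl _, p1, by omega, by omega⟩
  · rintro g h g' h' ⟨-, eg, hF, eh, hd, i1, -⟩ ⟨-, eg', hF', eh', hd', i2, -⟩
    obtain ⟨ρ, r1, r2⟩ := iso_sub_unique eg eh eg' eh' hF hF' hd hd' i1 i2
    exact ⟨⟨ρ, r1⟩, ⟨ρ, r2⟩⟩
  · obtain ⟨g, h, hg, eg, hF, eh, hd, rfl⟩ := sub_inv he
    have hc := ncard_AEn hf
    rw [ncard_sub hd] at hc
    have p2 := hF.1.ncard_pos
    rcases third_existence eg eh hF hd hT.2.2 with hi | ⟨g₀, G, rfl, hd0, hT0, e0, hi, eG⟩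
    · left
      have := ncard_iso hi
      exact ⟨g, h, hF.iso (Iso_symm hi), eg, Iso_symm hi, hd, Iso_refl _, by omega⟩
    · right
      have h1 := ncard_iso hi
      rw [ncard_add hd0] at hc
      rw [Vars_add hd0, Set.disjoint_union_left] at hd
      have p0 := hT0.1.ncard_pos
      exact ⟨g₀, G, h, hT0, e0, hF.iso (Iso_symm hi), eG, Iso_symm hi, hd0, hd.1, hd.2,
        Iso_refl _, by omega, by omega, by omega⟩
  · rintro ⟨⟨k, k', hFk, ek, ik, dk, i1, -⟩,
      ⟨g, h, h', hTg, eg, hF, eh, ih, d1, d2, d3, i2, -⟩⟩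
    obtain ⟨ρ, r1, -⟩ := iso_sub_unique ek (ek.iso (Iso_symm ik))
      (EndsIn.add hTg.1 hF.1 d1 eg eh) (eh.iso (Iso_symm ih)) (hFk.iso (Iso_symm ik))
      (hF.iso (Iso_symm ih)) dk (disj_add d1 d2 d3) i1 i2
    have h1 := hFk.perm ρ
    rw [r1] at h1
    exact (FirstType.left hTg.1 hF.1 d1 h1).2 hTg.2.1
  · rintro h h' k k' ⟨hF, eh, ih, d, i1, -⟩ ⟨hFk, ek, ik, dk, i2, -⟩
    obtain ⟨ρ, r1, -⟩ := iso_sub_unique eh (eh.iso (Iso_symm ih)) ek (ek.iso (Iso_symm ik))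
      (hF.iso (Iso_symm ih)) (hFk.iso (Iso_symm ik)) d dk i1 i2
    exact ⟨ρ, r1⟩
  · rintro g h h' g₂ h₂ h₂' ⟨hT1, eg, hF, eh, ih, d1, d2, d3, i1, -⟩
      ⟨hT2, eg2, hF2, eh2, ih2, d1', d2', d3', i2, -⟩
    obtain ⟨ρ, r1, r2⟩ := iso_sub_unique (EndsIn.add hT1.1 hF.1 d1 eg eh)
      (eh.iso (Iso_symm ih)) (EndsIn.add hT2.1 hF2.1 d1' eg2 eh2) (eh2.iso (Iso_symm ih2))
      (hF.iso (Iso_symm ih)) (hF2.iso (Iso_symm ih2)) (disj_add d1 d2 d3)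
      (disj_add d1' d2' d3') i1 i2
    refine ⟨⟨ρ, ?_⟩, Iso_trans (Iso_symm ih) (Iso_trans ⟨ρ, r2⟩ ih2)⟩
    rw [map_add] at r1
    have hT1' : ThirdType (permAct ρ g) := by
      obtain ⟨a, b, c⟩ := hT1
      refine ⟨a.perm ρ, by rw [← map_neg]; exact b.perm ρ, ?_⟩
      rw [← map_neg]
      exact Iso_trans (Iso_symm ⟨ρ, rfl⟩) (Iso_trans c ⟨ρ, rfl⟩)
    exact third_add_unique (eg.perm ρ) (eh.perm ρ) eg2 eh2 (hF.perm ρ) hF2 hT1' hT2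
      (disj_permAct ρ d1) d1' r1

end
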